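/- Let 𝓗 = {H₁, …, H_ℓ} be a finite collection of strongly quasiconvex subgroups of a finitely generated group G. Then 𝓗 has finite height in G: there exists n such that for any k > n and any conjugates g₁H_{σ(1)}g₁⁻¹, …, g_kH_{σ(k)}g_k⁻¹ (with each H_{σ(i)} ∈ 𝓗) whose cosets g₁H_{σ(1)}, …, g_kH_{σ(k)} are pairwise distinct, the intersection g₁H_{σ(1)}g₁⁻¹ ∩ … ∩ g_kH_{σ(k)}g_k⁻¹ is finite. -/

import Mathlib

/-!
The proof shows that all the cosets `gᵢ H_{σ(i)}` meet one ball whose radius `R` depends only on the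
subgroups; hence there are at most `ℓ` times the cardinality of a ball of radius `R` of them.

Suppose the intersection `J` of the conjugates is infinite, let `D` bound the lengths of the `gᵢ`,
and take `j ∈ J` much longer than `D`. Since `j gᵢ ∈ gᵢ H_{σ(i)}`, both ends of a geodesic from `1`
to `j` are within `D` of each coset. Joining a point of the coset near each end to its nearest point
on the geodesic gives a `(3, 0)`-quasi-geodesic with ends on the coset which still contains the
middle part of the geodesic (`infDist_middle_le`). By the Morse property a point `m` of that middle
part is at distance at most `M(3, 0)` from every coset, a bound independent of `D`
(`exists_radius`).

The Morse hypothesis concerns geodesic models of the Cayley graph living in `Type`, so one has to be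
constructed: `GraphMetric.exists_model` realizes any graph metric by a geodesic space, and a
finitely generated group, being countable, can be transported to `Type` (`exists_cayleyModel`).
-/

open Metric Set Pointwise
open scoped ENNReal

noncomputable section

/-- The `(K,C)`-quasi-isometric-embedding inequalities for a map `γ : ℝ → X`
restricted to a subset `s ⊆ ℝ`; for `s` an interval this is the notion of a
`(K,C)`-quasi-geodesic. -/
def QIEmbedOn {X : Type*} [MetricSpace X] (γ : ℝ → X) (s : Set ℝ) (K C : ℝ) : Prop :=
  ∀ a ∈ s, ∀ b ∈ s,
    (1 / K) * |a - b| - C ≤ dist (γ a) (γ b) ∧ dist (γ a) (γ b) ≤ K * |a - b| + C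

/-- `Φ` is a `(K,L)`-quasi-isometric embedding. -/
def QIEmbeddingWith {A X : Type*} [MetricSpace A] [MetricSpace X] (Φ : A → X)
    (K L : ℝ) : Prop :=
  1 ≤ K ∧ 0 ≤ L ∧ ∀ a b : A,
    (1 / K) * dist a b - L ≤ dist (Φ a) (Φ b) ∧ dist (Φ a) (Φ b) ≤ K * dist a b + L

/-- `Φ` is a quasi-isometric embedding. -/
def IsQIEmbedding {A X : Type*} [MetricSpace A] [MetricSpace X] (Φ : A → X) : Prop :=
  ∃ K L : ℝ, QIEmbeddingWith Φ K L

/-- A metric space is geodesic if every pair of points is joined by an isometrically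
parametrized segment. -/
def IsGeodesicSpace (X : Type*) [MetricSpace X] : Prop :=
  ∀ x y : X, ∃ γ : ℝ → X, γ 0 = x ∧ γ (dist x y) = y ∧
    ∀ s ∈ Icc (0 : ℝ) (dist x y), ∀ t ∈ Icc (0 : ℝ) (dist x y), dist (γ s) (γ t) = |s - t|

/-- A subset `A` is Morse: every `(K,C)`-quasi-geodesic with endpoints on `A` stays in a
uniform `M = M(K,C)` neighborhood of `A`. -/
def IsMorse {X : Type*} [MetricSpace X] (A : Set X) : Prop :=
  ∀ K C : ℝ, 1 ≤ K → 0 ≤ C → ∃ M : ℝ, 0 ≤ M ∧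
    ∀ (γ : ℝ → X) (a b : ℝ), a ≤ b → QIEmbedOn γ (Icc a b) K C →
      γ a ∈ A → γ b ∈ A → ∀ t ∈ Icc a b, infDist (γ t) A ≤ M

/-- `A` is Morse with the specific Morse gauge `N`. -/
def MorseWithGauge {X : Type*} [MetricSpace X] (A : Set X) (N : ℝ → ℝ → ℝ) : Prop :=
  ∀ K C : ℝ, 1 ≤ K → 0 ≤ C →
    ∀ (γ : ℝ → X) (a b : ℝ), a ≤ b → QIEmbedOn γ (Icc a b) K C →
      γ a ∈ A → γ b ∈ A → ∀ t ∈ Icc a b, infDist (γ t) A ≤ N K C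

/-- A subset `A ⊆ X` is stable: any two `(K,L)`-quasi-geodesics with the same endpoints
on `A` are at uniformly bounded Hausdorff distance `R = R(K,L)`. -/
def IsStableSubset {X : Type*} [MetricSpace X] (A : Set X) : Prop :=
  ∀ K L : ℝ, 1 ≤ K → 0 ≤ L → ∃ R : ℝ, 0 ≤ R ∧
    ∀ (γ γ' : ℝ → X) (a b a' b' : ℝ), a ≤ b → a' ≤ b' →
      QIEmbedOn γ (Icc a b) K L → QIEmbedOn γ' (Icc a' b') K L →
      γ a = γ' a' → γ b = γ' b' → γ a ∈ A → γ b ∈ A →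
      hausdorffDist (γ '' Icc a b) (γ' '' Icc a' b') < R

/-- `s` is (the image of) a geodesic segment from `x` to `y`. -/
def IsGeodesicSegment {X : Type*} [MetricSpace X] (s : Set X) (x y : X) : Prop :=
  ∃ γ : ℝ → X, γ 0 = x ∧ γ (dist x y) = y ∧ s = γ '' Icc 0 (dist x y) ∧
    ∀ u ∈ Icc (0 : ℝ) (dist x y), ∀ v ∈ Icc (0 : ℝ) (dist x y), dist (γ u) (γ v) = |u - v|

/-- `X` is (Gromov) hyperbolic: there is `δ ≥ 0` such that every geodesic triangle is
`δ`-thin (each side lies in the `δ`-neighborhood of the union of the other two sides). -/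
def IsHyperbolic (X : Type*) [MetricSpace X] : Prop :=
  ∃ δ : ℝ, 0 ≤ δ ∧ ∀ x y z : X, ∀ s₁ s₂ s₃ : Set X,
    IsGeodesicSegment s₁ x y → IsGeodesicSegment s₂ y z → IsGeodesicSegment s₃ x z →
    ∀ p ∈ s₃, infDist p (s₁ ∪ s₂) ≤ δ

/-- The induced length (pseudo)distance `d_r(x,y)` on the complement of the open
`r`-neighborhood of `A`: the infimum of lengths of paths from `x` to `y` staying at
distance at least `r` from `A` (with value `∞` if there is no such path). -/
def relPathDist {X : Type*} [MetricSpace X] (A : Set X) (r : ℝ) (x y : X) : ℝ≥0∞ :=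
  ⨅ (γ : ℝ → X) (a : ℝ) (b : ℝ) (_ : a ≤ b) (_ : ContinuousOn γ (Icc a b))
    (_ : γ a = x) (_ : γ b = y) (_ : ∀ t ∈ Icc a b, r ≤ infDist (γ t) A),
    eVariationOn γ (Icc a b)

/-- The lower relative divergence `σ^n_ρ(r)` of `X` with respect to `A`:
the infimum of `d_{ρr}(x,y)` over `x, y ∈ ∂N_r(A)` with `d_r(x,y) < ∞` and
`d(x,y) ≥ n r` (and `∞` if there is no such pair). -/
def lowerRelDiv {X : Type*} [MetricSpace X] (A : Set X) (n : ℕ) (ρ r : ℝ) : ℝ≥0∞ :=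
  ⨅ (x : X) (y : X) (_ : infDist x A = r) (_ : infDist y A = r)
    (_ : relPathDist A r x y ≠ ⊤) (_ : (n : ℝ) * r ≤ dist x y),
    relPathDist A (ρ * r) x y

/-- `f : [0,∞) → [0,∞]` is completely super linear: for each `C > 0` the set of `x ≥ 0`
with `f x ≤ C x` is bounded. -/
def CompletelySuperLinear (f : ℝ → ℝ≥0∞) : Prop :=
  ∀ C : ℝ, 0 < C → ∃ B : ℝ, ∀ x : ℝ, 0 ≤ x → f x ≤ ENNReal.ofReal (C * x) → x ≤ B

/-- A family `{σ^n_ρ}` is completely super linear if there is `n₀ ≥ 3` such that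
`σ^{n₀}_ρ` is completely super linear for every `ρ ∈ (0,1]`. -/
def FamilyCSL (σ : ℕ → ℝ → ℝ → ℝ≥0∞) : Prop :=
  ∃ n₀ : ℕ, 3 ≤ n₀ ∧ ∀ ρ : ℝ, 0 < ρ → ρ ≤ 1 → CompletelySuperLinear (σ n₀ ρ)

/-- `f` is dominated by `g` : `f(x) ≤ A g(Bx) + Cx` for all `x > D`. -/
def FunDominatedBy (f g : ℝ → ℝ≥0∞) : Prop :=
  ∃ A B C D : ℝ, 0 < A ∧ 0 < B ∧ 0 < C ∧ 0 < D ∧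
    ∀ x : ℝ, D < x → f x ≤ ENNReal.ofReal A * g (B * x) + ENNReal.ofReal (C * x)

/-- The quadratic function `r ↦ r²` viewed in `[0,∞]`. -/
def quadFun : ℝ → ℝ≥0∞ := fun r => ENNReal.ofReal (r ^ 2)

/-- The family `{σ^n_ρ}` dominates the function `f` (i.e. the constant family `f` is
dominated by `{σ^n_ρ}`): there are `L ∈ (0,1]` and a positive integer `M` such that
`f ≼ σ^{Mn}_ρ` for all `n ≥ 2`, `ρ ∈ (0,1]`. -/
def FamilyDominatesFun (σ : ℕ → ℝ → ℝ → ℝ≥0∞) (f : ℝ → ℝ≥0∞) : Prop :=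
  ∃ (L : ℝ) (M : ℕ), 0 < L ∧ L ≤ 1 ∧ 0 < M ∧
    ∀ n : ℕ, 2 ≤ n → ∀ ρ : ℝ, 0 < ρ → ρ ≤ 1 → FunDominatedBy f (σ (M * n) ρ)

/-- The family `{σ^n_ρ}` is dominated by the function `f`: there are `L ∈ (0,1]` and a
positive integer `M` such that `σ^n_{Lρ} ≼ f` for all `n ≥ 2`, `ρ ∈ (0,1]`. -/
def FamilyDominatedByFun (σ : ℕ → ℝ → ℝ → ℝ≥0∞) (f : ℝ → ℝ≥0∞) : Prop :=
  ∃ (L : ℝ) (M : ℕ), 0 < L ∧ L ≤ 1 ∧ 0 < M ∧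
    ∀ n : ℕ, 2 ≤ n → ∀ ρ : ℝ, 0 < ρ → ρ ≤ 1 → FunDominatedBy (σ n (L * ρ)) f

/-- The family is at least quadratic. -/
def FamilyAtLeastQuadratic (σ : ℕ → ℝ → ℝ → ℝ≥0∞) : Prop :=
  FamilyDominatesFun σ quadFun

/-- The family is (exactly) quadratic. -/
def FamilyQuadratic (σ : ℕ → ℝ → ℝ → ℝ≥0∞) : Prop :=
  FamilyDominatesFun σ quadFun ∧ FamilyDominatedByFun σ quadFun

/-- Word length of `g` with respect to a generating set `S` (letters from `S ∪ S⁻¹`). -/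
def wordLength {G : Type*} [Group G] (S : Set G) (g : G) : ℕ :=
  sInf {n : ℕ | ∃ w : List G, w.length = n ∧ (∀ x ∈ w, x ∈ S ∨ x⁻¹ ∈ S) ∧ w.prod = g}

/-- The word metric on `G` with respect to `S`. -/
def wordDist {G : Type*} [Group G] (S : Set G) (g h : G) : ℝ :=
  (wordLength S (g⁻¹ * h) : ℝ)

/-- The distance `d_S(g, A)` from `g` to a subset `A ⊆ G` in the word metric. -/
def wordDistToSet {G : Type*} [Group G] (S : Set G) (g : G) (A : Set G) : ℕ :=
  sInf {n : ℕ | ∃ a ∈ A, wordLength S (g⁻¹ * a) = n}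

/-- `X`, together with the vertex map `ι : G → X`, is a geometric model for the Cayley
graph `Γ(G,S)`: `X` is geodesic, `ι` realizes the word metric on the vertex set, and every
point of `X` is within `1/2` of a vertex (as in the unit-edge-length Cayley graph). -/
def CayleyModel (G : Type*) [Group G] (S : Set G) (X : Type*) [MetricSpace X]
    (ι : G → X) : Prop :=
  IsGeodesicSpace X ∧ (∀ g h : G, dist (ι g) (ι h) = wordDist S g h) ∧
    ∀ x : X, ∃ g : G, dist x (ι g) ≤ 1 / 2

/-- `H ≤ G` is strongly quasiconvex: `H` is a Morse subset of the Cayley graph of `G`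
with respect to some (equivalently, any) finite generating set. -/
def StronglyQuasiconvex {G : Type*} [Group G] (H : Subgroup G) : Prop :=
  ∀ S : Set G, S.Finite → Subgroup.closure S = ⊤ →
    ∀ (X : Type) [MetricSpace X], ∀ ι : G → X, CayleyModel G S X ι →
      IsMorse (ι '' (H : Set G))

/-- `H` is a finitely generated undistorted subgroup of `G` (with respect to the word
metric of the finite generating set `S` of `G`): the inclusion `(H,d_T) → (G,d_S)` is a
quasi-isometric embedding for some finite generating set `T` of `H`. -/
def Undistorted {G : Type*} [Group G] (S : Set G) (H : Subgroup G) : Prop :=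
  ∃ T : Set H, T.Finite ∧ Subgroup.closure T = ⊤ ∧
    ∃ K L : ℝ, 1 ≤ K ∧ 0 ≤ L ∧ ∀ h₁ h₂ : H,
      (1 / K) * wordDist T h₁ h₂ - L ≤ wordDist S (h₁ : G) (h₂ : G) ∧
      wordDist S (h₁ : G) (h₂ : G) ≤ K * wordDist T h₁ h₂ + L

/-- `H` is a stable subgroup of `G`: `H` is finitely generated and undistorted, and its
image in (a model `X` of) the Cayley graph `Γ(G,S)` is a stable subset. -/
def StableIn {G : Type*} [Group G] (S : Set G) (H : Subgroup G) (X : Type*)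
    [MetricSpace X] (ι : G → X) : Prop :=
  Undistorted S H ∧ IsStableSubset (ι '' (H : Set G))

/-- A group is hyperbolic if its Cayley graph with respect to some (equivalently, any)
finite generating set is a hyperbolic geodesic space. -/
def IsHyperbolicGroup (H : Type*) [Group H] : Prop :=
  ∀ T : Set H, T.Finite → Subgroup.closure T = ⊤ →
    ∀ (Y : Type) [MetricSpace Y], ∀ ι : H → Y, CayleyModel H T Y ι → IsHyperbolic Y

/-- A geodesic ray in `X` (isometric embedding of `[0,∞)`). -/
def IsGeodesicRay {X : Type*} [MetricSpace X] (γ : ℝ → X) : Prop :=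
  ∀ s ∈ Ici (0 : ℝ), ∀ t ∈ Ici (0 : ℝ), dist (γ s) (γ t) = |s - t|

/-- `γ` restricted to `[a,b]` is a geodesic (isometric parametrization). -/
def IsGeodesicOn {X : Type*} [MetricSpace X] (γ : ℝ → X) (a b : ℝ) : Prop :=
  ∀ s ∈ Icc a b, ∀ t ∈ Icc a b, dist (γ s) (γ t) = |s - t|

/-- `γ` is parametrized by arc length on `[a,b]`. -/
def ArcLengthParamOn {X : Type*} [MetricSpace X] (γ : ℝ → X) (a b : ℝ) : Prop :=
  ∀ s t : ℝ, a ≤ s → s ≤ t → t ≤ b → eVariationOn γ (Icc s t) = ENNReal.ofReal (t - s)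

/-- Relations of a right-angled Coxeter group on a simplicial graph `Γ`. -/
def racgRels {V : Type} (Γ : SimpleGraph V) : Set (FreeGroup V) :=
  {rel | (∃ v : V, rel = FreeGroup.of v * FreeGroup.of v) ∨
    (∃ v w : V, Γ.Adj v w ∧
      rel = FreeGroup.of v * FreeGroup.of w * (FreeGroup.of v)⁻¹ * (FreeGroup.of w)⁻¹)}

/-- The right-angled Coxeter group associated to a finite simplicial graph `Γ`. -/
abbrev RACG {V : Type} (Γ : SimpleGraph V) : Type := PresentedGroup (racgRels Γ)

/-- The standard generator of `RACG Γ` corresponding to a vertex. -/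
def racgGen {V : Type} (Γ : SimpleGraph V) (v : V) : RACG Γ := PresentedGroup.of v

/-- Relations of a right-angled Artin group on a simplicial graph `Γ`. -/
def raagRels {V : Type} (Γ : SimpleGraph V) : Set (FreeGroup V) :=
  {rel | ∃ v w : V, Γ.Adj v w ∧
    rel = FreeGroup.of v * FreeGroup.of w * (FreeGroup.of v)⁻¹ * (FreeGroup.of w)⁻¹}

/-- The right-angled Artin group associated to a finite simplicial graph `Γ`. -/
abbrev RAAG {V : Type} (Γ : SimpleGraph V) : Type := PresentedGroup (raagRels Γ)

/-- The standard generator of `RAAG Γ` corresponding to a vertex. -/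
def raagGen {V : Type} (Γ : SimpleGraph V) (v : V) : RAAG Γ := PresentedGroup.of v

/-- `a b c d` (in this cyclic order) form an induced `4`-cycle of `Γ`. -/
def InducedFourCycle {V : Type} (Γ : SimpleGraph V) (a b c d : V) : Prop :=
  a ≠ b ∧ a ≠ c ∧ a ≠ d ∧ b ≠ c ∧ b ≠ d ∧ c ≠ d ∧
  Γ.Adj a b ∧ Γ.Adj b c ∧ Γ.Adj c d ∧ Γ.Adj d a ∧ ¬ Γ.Adj a c ∧ ¬ Γ.Adj b d

/-! ### Paths of speed at most one -/

/-- There is a `1`-Lipschitz path defined on `[0, L]` from `x` to `y`. When `L = dist x y` such a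
path is automatically a geodesic. -/
def ShortPath {X : Type*} [MetricSpace X] (L : ℝ) (x y : X) : Prop :=
  0 ≤ L ∧ ∃ γ : ℝ → X, γ 0 = x ∧ γ L = y ∧
    ∀ s ∈ Icc (0 : ℝ) L, ∀ t ∈ Icc (0 : ℝ) L, dist (γ s) (γ t) ≤ |s - t|

/-- It suffices to check a Lipschitz bound on ordered pairs. -/
lemma lip_of_le {X : Type*} [MetricSpace X] {γ : ℝ → X} {I : Set ℝ}
    (h : ∀ s ∈ I, ∀ t ∈ I, s ≤ t → dist (γ s) (γ t) ≤ t - s) :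
    ∀ s ∈ I, ∀ t ∈ I, dist (γ s) (γ t) ≤ |s - t| := by
  intro s hs t ht
  rcases le_total s t with hst | hst
  · rw [abs_sub_comm, abs_of_nonneg (sub_nonneg.2 hst)]; exact h s hs t ht hst
  · rw [dist_comm, abs_of_nonneg (sub_nonneg.2 hst)]; exact h t ht s hs hst

lemma le_of_lip {X : Type*} [MetricSpace X] {γ : ℝ → X} {I : Set ℝ}
    (h : ∀ s ∈ I, ∀ t ∈ I, dist (γ s) (γ t) ≤ |s - t|) :
    ∀ s ∈ I, ∀ t ∈ I, s ≤ t → dist (γ s) (γ t) ≤ t - s := by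
  intro s hs t ht hst
  have := h s hs t ht
  rwa [abs_sub_comm, abs_of_nonneg (sub_nonneg.2 hst)] at this

/-- Concatenation of paths, remembering the intermediate point. -/
lemma concat_path {X : Type*} [MetricSpace X] {L L' : ℝ} {x y z : X}
    (h : ShortPath L x y) (h' : ShortPath L' y z) :
    ∃ γ : ℝ → X, γ 0 = x ∧ γ L = y ∧ γ (L + L') = z ∧
      ∀ s ∈ Icc (0 : ℝ) (L + L'), ∀ t ∈ Icc (0 : ℝ) (L + L'), dist (γ s) (γ t) ≤ |s - t| := by
  obtain ⟨hL, γ, h0, h1, hγ⟩ := h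
  obtain ⟨hL', δ, k0, k1, hδ⟩ := h'
  replace hγ := le_of_lip hγ
  replace hδ := le_of_lip hδ
  refine ⟨fun s => if s ≤ L then γ s else δ (s - L), by simp [hL, h0], by simp [h1], ?_, ?_⟩
  · by_cases hz : L' ≤ 0
    · have : L' = 0 := le_antisymm hz hL'
      subst this
      simp [h1, ← k1, k0]
    · simp [hz, k1]
  · refine lip_of_le fun s hs t ht hst => ?_
    simp only [mem_Icc] at *
    by_cases c1 : t ≤ L
    · have c2 : s ≤ L := hst.trans c1
      simp only [c1, c2, if_true]
      exact hγ s ⟨hs.1, c2⟩ t ⟨ht.1, c1⟩ hst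
    · push Not at c1
      by_cases c2 : s ≤ L
      · simp only [c2, not_le.2 c1, if_true, if_false]
        have e1 := hγ s ⟨hs.1, c2⟩ L ⟨hL, le_rfl⟩ c2
        have e2 := hδ 0 ⟨le_rfl, hL'⟩ (t - L) ⟨by linarith, by linarith⟩ (by linarith)
        rw [h1] at e1
        rw [k0] at e2
        linarith [dist_triangle (γ s) y (δ (t - L))]
      · push Not at c2
        simp only [not_le.2 c1, not_le.2 c2, if_false]
        have e2 := hδ (s - L) ⟨by linarith, by linarith⟩ (t - L) ⟨by linarith, by linarith⟩
          (by linarith)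
        linarith

lemma ShortPath.trans {X : Type*} [MetricSpace X] {L L' : ℝ} {x y z : X}
    (h : ShortPath L x y) (h' : ShortPath L' y z) : ShortPath (L + L') x z := by
  obtain ⟨γ, h0, -, h2, h3⟩ := concat_path h h'
  exact ⟨add_nonneg h.1 h'.1, γ, h0, h2, h3⟩

lemma ShortPath.symm {X : Type*} [MetricSpace X] {L : ℝ} {x y : X}
    (h : ShortPath L x y) : ShortPath L y x := by
  obtain ⟨hL, γ, h0, h1, hγ⟩ := h
  refine ⟨hL, fun s => γ (L - s), by simpa using h1, by simpa using h0, fun s hs t ht => ?_⟩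
  have := hγ (L - s) ⟨by linarith [hs.2], by linarith [hs.1]⟩ (L - t)
    ⟨by linarith [ht.2], by linarith [ht.1]⟩
  rwa [show L - s - (L - t) = t - s by ring, abs_sub_comm] at this

lemma ShortPath.refl {X : Type*} [MetricSpace X] (x : X) : ShortPath 0 x x :=
  ⟨le_rfl, fun _ => x, rfl, rfl, fun s _ t _ => by simp⟩

/-- A `1`-Lipschitz path whose endpoints are as far apart as possible is a geodesic. -/
lemma geodesic_of_lip {X : Type*} [MetricSpace X] {γ : ℝ → X} {L : ℝ}
    (h : ∀ s ∈ Icc (0 : ℝ) L, ∀ t ∈ Icc (0 : ℝ) L, dist (γ s) (γ t) ≤ |s - t|)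
    (hL : L ≤ dist (γ 0) (γ L)) :
    ∀ s ∈ Icc (0 : ℝ) L, ∀ t ∈ Icc (0 : ℝ) L, dist (γ s) (γ t) = |s - t| := by
  have key : ∀ s ∈ Icc (0 : ℝ) L, ∀ t ∈ Icc (0 : ℝ) L, s ≤ t → dist (γ s) (γ t) = t - s := by
    intro s hs t ht hst
    have h' := le_of_lip h
    have h0 : (0 : ℝ) ∈ Icc (0 : ℝ) L := ⟨le_rfl, hs.1.trans hs.2⟩
    have h1 : L ∈ Icc (0 : ℝ) L := ⟨hs.1.trans hs.2, le_rfl⟩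
    have e1 := h' 0 h0 s hs hs.1
    have e2 := h' s hs t ht hst
    have e3 := h' t ht L h1 ht.2
    have := dist_triangle4 (γ 0) (γ s) (γ t) (γ L)
    linarith
  intro s hs t ht
  rcases le_total s t with hst | hst
  · rw [abs_sub_comm, abs_of_nonneg (sub_nonneg.2 hst)]; exact key s hs t ht hst
  · rw [dist_comm, abs_of_nonneg (sub_nonneg.2 hst)]; exact key t ht s hs hst

lemma isGeodesicSpace_of_shortPath {X : Type*} [MetricSpace X]
    (h : ∀ x y : X, ShortPath (dist x y) x y) : IsGeodesicSpace X := by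
  intro x y
  obtain ⟨-, γ, h0, h1, hγ⟩ := h x y
  exact ⟨γ, h0, h1, geodesic_of_lip hγ (by rw [h0, h1])⟩

lemma IsGeodesicSpace.shortPath {X : Type*} [MetricSpace X] (h : IsGeodesicSpace X) (x y : X) :
    ShortPath (dist x y) x y := by
  obtain ⟨γ, h0, h1, hγ⟩ := h x y
  exact ⟨dist_nonneg, γ, h0, h1, fun s hs t ht => (hγ s hs t ht).le⟩

/-! ### Geometric realization of a graph metric -/

/-- A graph metric on a set `V`: a metric with values in `ℕ` such that points at distance `k + l`
have a point at distances exactly `k` and `l` from them. -/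
structure GraphMetric (V : Type*) where
  /-- the distance function -/
  d : V → V → ℕ
  self : ∀ x, d x x = 0
  eq : ∀ x y, d x y = 0 → x = y
  symm : ∀ x y, d x y = d y x
  tri : ∀ x y z, d x z ≤ d x y + d y z
  split : ∀ x y k l, d x y = k + l → ∃ z, d x z = k ∧ d z y = l

/-- Points of the realization: `t` is the distance from `u` along the oriented edge `(u, v)`.
There are two edges joining each pair of adjacent vertices, one for each orientation, and a loop
at every vertex; this does not affect the distances between vertices. -/
structure EdgePt {V : Type*} (D : GraphMetric V) where
  /-- origin of the edge -/
  u : V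
  /-- end of the edge -/
  v : V
  le : D.d u v ≤ 1
  /-- position on the edge -/
  t : ℝ
  mem : t ∈ Icc (0 : ℝ) 1

namespace EdgePt

variable {V : Type*} {D : GraphMetric V}

/-- The two endpoints of the edge carrying `p`. -/
def x (p : EdgePt D) (i : Bool) : V := if i then p.v else p.u

/-- The distance along the edge from `p` to each of the endpoints. -/
def a (p : EdgePt D) (i : Bool) : ℝ := if i then 1 - p.t else p.t

/-- Length of the shortest path from `p` to `q` through the endpoint `i` of the edge of `p` and
the endpoint `j` of the edge of `q`. -/
def via (p q : EdgePt D) (i j : Bool) : ℝ := p.a i + D.d (p.x i) (q.x j) + q.a j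

/-- Length of the shortest path from `p` to `q` passing through vertices. -/
def far (p q : EdgePt D) : ℝ :=
  min (min (via p q false false) (via p q false true))
    (min (via p q true false) (via p q true true))

/-- `p` and `q` lie on the same oriented edge. -/
def Same (p q : EdgePt D) : Prop := p.u = q.u ∧ p.v = q.v

open Classical in
/-- The path distance. -/
def ed (p q : EdgePt D) : ℝ := if Same p q then min |p.t - q.t| (far p q) else far p q

lemma ed_le_via (p q : EdgePt D) (i j : Bool) : ed p q ≤ via p q i j := by
  have : far p q ≤ via p q i j := by
    unfold far
    cases i <;> cases j <;> simp
  unfold ed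
  split_ifs
  · exact (min_le_right _ _).trans this
  · exact this

lemma ed_le_same (p q : EdgePt D) (h : Same p q) : ed p q ≤ |p.t - q.t| := by
  unfold ed
  rw [if_pos h]
  exact min_le_left _ _

lemma ed_cases (p q : EdgePt D) :
    (∃ i j, ed p q = via p q i j) ∨ (Same p q ∧ ed p q = |p.t - q.t|) := by
  have : ∃ i j, far p q = via p q i j := by
    unfold far
    rcases min_choice (min (via p q false false) (via p q false true))
      (min (via p q true false) (via p q true true)) with h | h <;> rw [h]
    · rcases min_choice (via p q false false) (via p q false true) with h | h <;>
        exact ⟨_, _, h⟩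
    · rcases min_choice (via p q true false) (via p q true true) with h | h <;>
        exact ⟨_, _, h⟩
  unfold ed
  split_ifs with hs
  · rcases min_choice |p.t - q.t| (far p q) with h | h <;> rw [h]
    · exact Or.inr ⟨hs, rfl⟩
    · exact Or.inl this
  · exact Or.inl this

lemma a_nonneg (p : EdgePt D) (i : Bool) : 0 ≤ p.a i := by
  have := p.mem
  simp only [mem_Icc] at this
  cases i <;> simp [a] <;> linarith

lemma d_x_le (p : EdgePt D) (i j : Bool) : (D.d (p.x i) (p.x j) : ℝ) ≤ p.a i + p.a j := by
  have h := p.mem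
  simp only [mem_Icc] at h
  have h1 : (D.d p.u p.v : ℝ) ≤ 1 := by exact_mod_cast p.le
  have h2 : (D.d p.v p.u : ℝ) ≤ 1 := by rw [D.symm]; exact h1
  cases i <;> cases j <;> simp only [a, x, D.self, Nat.cast_zero, if_true, if_false,
    Bool.false_eq_true] <;> linarith

lemma Same.x_eq {p q : EdgePt D} (h : Same p q) (i : Bool) : p.x i = q.x i := by
  cases i <;> simp [x, h.1, h.2]

lemma Same.symm {p q : EdgePt D} (h : Same p q) : Same q p := ⟨h.1.symm, h.2.symm⟩

lemma a_le (p q : EdgePt D) (i : Bool) : p.a i ≤ |p.t - q.t| + q.a i := by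
  have := le_abs_self (p.t - q.t)
  have := neg_abs_le (p.t - q.t)
  cases i <;> simp [a] <;> linarith

lemma via_symm (p q : EdgePt D) (i j : Bool) : via p q i j = via q p j i := by
  unfold via
  rw [D.symm]
  ring

lemma ed_comm_le (p q : EdgePt D) : ed p q ≤ ed q p := by
  rcases ed_cases q p with ⟨i, j, h⟩ | ⟨hs, h⟩
  · rw [h, ← via_symm]; exact ed_le_via _ _ _ _
  · rw [h, abs_sub_comm]; exact ed_le_same _ _ hs.symm

lemma ed_nonneg (p q : EdgePt D) : 0 ≤ ed p q := by
  rcases ed_cases p q with ⟨i, j, h⟩ | ⟨hs, h⟩ <;> rw [h]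
  · have := a_nonneg p i
    have := a_nonneg q j
    unfold via
    positivity
  · positivity

lemma tri_via_same (p q r : EdgePt D) (i j : Bool) (h : Same q r) :
    ed p r ≤ via p q i j + |q.t - r.t| := by
  have e1 := ed_le_via p r i j
  have e2 := a_le r q j
  unfold via at *
  rw [h.x_eq j]
  rw [abs_sub_comm] at e2
  linarith

lemma ed_tri (p q r : EdgePt D) : ed p r ≤ ed p q + ed q r := by
  rcases ed_cases p q with ⟨i, j, h⟩ | ⟨hs, h⟩ <;>
    rcases ed_cases q r with ⟨i', j', h'⟩ | ⟨hs', h'⟩ <;> rw [h, h']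
  · have e1 := ed_le_via p r i j'
    have e2 := d_x_le q j i'
    have e3 : (D.d (p.x i) (r.x j') : ℝ) ≤ D.d (p.x i) (q.x j) + D.d (q.x j) (q.x i')
        + D.d (q.x i') (r.x j') := by
      have := D.tri (p.x i) (q.x j) (r.x j')
      have := D.tri (q.x j) (q.x i') (r.x j')
      norm_cast
      omega
    unfold via at *
    linarith
  · exact tri_via_same _ _ _ _ _ hs'
  · have := tri_via_same r q p j' i' hs.symm
    rw [via_symm, abs_sub_comm] at this
    linarith [ed_comm_le p r]
  · have e := ed_le_same p r ⟨hs.1.trans hs'.1, hs.2.trans hs'.2⟩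
    exact e.trans (abs_sub_le _ _ _)

/-- The path distance is only a pseudometric, since endpoints of different edges have not been
identified. -/
instance : PseudoMetricSpace (EdgePt D) where
  dist := ed
  dist_self p := le_antisymm (by simpa using ed_le_same p p ⟨rfl, rfl⟩) (ed_nonneg p p)
  dist_comm p q := le_antisymm (ed_comm_le p q) (ed_comm_le q p)
  dist_triangle := ed_tri

lemma dist_def (p q : EdgePt D) : dist p q = ed p q := rfl

/-- A vertex, as the origin of the loop based at it. -/
def vert (D : GraphMetric V) (w : V) : EdgePt D :=
  ⟨w, w, by simp [D.self], 0, by simp⟩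

lemma dist_vert (w w' : V) : dist (vert D w) (vert D w') = D.d w w' := by
  rw [dist_def]
  apply le_antisymm
  · simpa [via, vert, a, x] using ed_le_via (vert D w) (vert D w') false false
  · rcases ed_cases (vert D w) (vert D w') with ⟨i, j, h⟩ | ⟨hs, h⟩ <;> rw [h]
    · have := a_nonneg (vert D w) i
      have := a_nonneg (vert D w') j
      have e1 : (vert D w).x i = w := by cases i <;> rfl
      have e2 : (vert D w').x j = w' := by cases j <;> rfl
      unfold via
      rw [e1, e2]
      linarith
    · have : w = w' := hs.1
      simp [this, D.self]

lemma dist_vert_x (p : EdgePt D) (i : Bool) : dist p (vert D (p.x i)) ≤ p.a i := by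
  rw [dist_def]
  simpa [via, vert, a, x, D.self] using ed_le_via p (vert D (p.x i)) i false

/-- The same point at another position on the same edge. -/
def move (p : EdgePt D) (s : ℝ) : EdgePt D :=
  ⟨p.u, p.v, p.le, max 0 (min 1 s), by simp⟩

lemma move_self (p : EdgePt D) : p.move p.t = p := by
  have h := p.mem
  simp only [mem_Icc] at h
  obtain ⟨u, v, _, t, _⟩ := p
  simp only [move, EdgePt.mk.injEq, true_and]
  simp_all

lemma dist_move (p : EdgePt D) (s t : ℝ) : dist (p.move s) (p.move t) ≤ |s - t| := by
  refine (ed_le_same (p.move s) (p.move t) ⟨rfl, rfl⟩).trans ?_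
  simp only [move]
  grind

/-- The image of a point in the metric quotient. -/
abbrev pt (p : EdgePt D) : SeparationQuotient (EdgePt D) := SeparationQuotient.mk p

lemma pt_eq {p q : EdgePt D} (h : dist p q ≤ 0) : pt p = pt q := by
  rw [← dist_le_zero, SeparationQuotient.dist_mk]
  exact h

lemma shortPath_move (p : EdgePt D) {s t : ℝ} (hst : s ≤ t) :
    ShortPath (t - s) (pt (p.move s)) (pt (p.move t)) := by
  refine ⟨by linarith, fun r => pt (p.move (s + r)), by simp, by simp, fun r _ r' _ => ?_⟩
  rw [SeparationQuotient.dist_mk]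
  refine (dist_move _ _ _).trans ?_
  rw [add_sub_add_left_eq_sub]

lemma shortPath_same (p q : EdgePt D) (h : Same p q) :
    ShortPath |p.t - q.t| (pt p) (pt q) := by
  have hq : q = p.move q.t := by
    conv_lhs => rw [← move_self q]
    simp [move, h.1, h.2]
  have hp := move_self p
  rcases le_total p.t q.t with hle | hle
  · have := shortPath_move p hle
    rw [hp, ← hq] at this
    rwa [abs_sub_comm, abs_of_nonneg (sub_nonneg.2 hle)]
  · have := (shortPath_move p hle).symm
    rw [hp, ← hq] at this
    rwa [abs_of_nonneg (sub_nonneg.2 hle)]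

lemma shortPath_vert_x (p : EdgePt D) (i : Bool) :
    ShortPath (p.a i) (pt p) (pt (vert D (p.x i))) := by
  have hm := p.mem
  simp only [mem_Icc] at hm
  cases i
  · have h := shortPath_same p (p.move 0) ⟨rfl, rfl⟩
    have e : pt (p.move 0) = pt (vert D (p.x false)) := by
      apply pt_eq
      refine (dist_vert_x (p.move 0) false).trans ?_
      simp [a, move]
    rw [e] at h
    simpa [move, a, abs_of_nonneg hm.1] using h
  · have h := shortPath_same p (p.move 1) ⟨rfl, rfl⟩
    have e : pt (p.move 1) = pt (vert D (p.x true)) := by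
      apply pt_eq
      refine (dist_vert_x (p.move 1) true).trans ?_
      simp [a, move]
    rw [e, abs_sub_comm] at h
    simpa [move, a, abs_of_nonneg (sub_nonneg.2 hm.2)] using h

lemma shortPath_vert (n : ℕ) : ∀ w w' : V, D.d w w' = n →
    ShortPath (n : ℝ) (pt (vert D w)) (pt (vert D w')) := by
  induction n with
  | zero =>
    intro w w' h
    rw [D.eq _ _ h]
    simpa using ShortPath.refl _
  | succ n ih =>
    intro w w' h
    obtain ⟨z, h1, h2⟩ := D.split w w' n 1 h
    -- the edge from `z` to `w'`, traversed from its origin to its end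
    have e := shortPath_vert_x (⟨z, w', h2.le, 0, by simp⟩ : EdgePt D) true
    have e' : pt (vert D z) = pt (⟨z, w', h2.le, 0, by simp⟩ : EdgePt D) := by
      symm
      apply pt_eq
      refine (dist_vert_x (⟨z, w', h2.le, 0, by simp⟩ : EdgePt D) false).trans ?_
      simp [a]
    rw [← e'] at e
    simpa [a, x] using (ih w z h1).trans e

lemma isGeodesicSpace_quot : IsGeodesicSpace (SeparationQuotient (EdgePt D)) := by
  refine isGeodesicSpace_of_shortPath fun P Q => ?_
  obtain ⟨p, rfl⟩ := SeparationQuotient.surjective_mk P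
  obtain ⟨q, rfl⟩ := SeparationQuotient.surjective_mk Q
  rw [SeparationQuotient.dist_mk, dist_def]
  rcases ed_cases p q with ⟨i, j, h⟩ | ⟨hs, h⟩ <;> rw [h]
  · exact ((shortPath_vert_x p i).trans (shortPath_vert _ _ _ rfl)).trans
      (shortPath_vert_x q j).symm
  · exact shortPath_same p q hs

end EdgePt

/-- Every graph metric is realized by a geodesic space in the same universe. -/
lemma GraphMetric.exists_model {V : Type} (D : GraphMetric V) :
    ∃ (X : Type) (_ : MetricSpace X) (ι : V → X), IsGeodesicSpace X ∧
      (∀ v w, dist (ι v) (ι w) = D.d v w) ∧ ∀ x : X, ∃ v, dist x (ι v) ≤ 1 / 2 := by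
  refine ⟨SeparationQuotient (EdgePt D), inferInstance, fun v => EdgePt.pt (EdgePt.vert D v),
    EdgePt.isGeodesicSpace_quot, fun v w => ?_, fun P => ?_⟩
  · rw [SeparationQuotient.dist_mk, EdgePt.dist_vert]
  · obtain ⟨p, rfl⟩ := SeparationQuotient.surjective_mk P
    rcases le_total p.t (1 / 2) with h | h
    · refine ⟨p.x false, ?_⟩
      rw [SeparationQuotient.dist_mk]
      exact (p.dist_vert_x false).trans (by simpa [EdgePt.a] using h)
    · refine ⟨p.x true, ?_⟩
      rw [SeparationQuotient.dist_mk]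
      exact (p.dist_vert_x true).trans (by simp only [EdgePt.a, if_true]; linarith)

/-! ### Word length -/

section WordLength

variable {G : Type*} [Group G] {S : Set G}

lemma wordLength_le_of_list (w : List G) (hw : ∀ x ∈ w, x ∈ S ∨ x⁻¹ ∈ S) :
    wordLength S w.prod ≤ w.length :=
  Nat.sInf_le ⟨w, rfl, hw, rfl⟩

lemma exists_word (hS : Subgroup.closure S = ⊤) (g : G) :
    ∃ w : List G, w.length = wordLength S g ∧ (∀ x ∈ w, x ∈ S ∨ x⁻¹ ∈ S) ∧ w.prod = g := by
  have hne : {n : ℕ | ∃ w : List G, w.length = n ∧ (∀ x ∈ w, x ∈ S ∨ x⁻¹ ∈ S) ∧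
      w.prod = g}.Nonempty := by
    have hg : g ∈ (Subgroup.closure S).toSubmonoid := by rw [hS]; trivial
    rw [Subgroup.closure_toSubmonoid] at hg
    obtain ⟨w, hw, hp⟩ := Submonoid.exists_list_of_mem_closure hg
    exact ⟨_, w, rfl, hw, hp⟩
  exact Nat.sInf_mem hne

lemma wordLength_one : wordLength S (1 : G) = 0 := by
  simpa using wordLength_le_of_list (S := S) ([] : List G) (by simp)

lemma eq_one_of_wordLength (hS : Subgroup.closure S = ⊤) {g : G} (h : wordLength S g = 0) :
    g = 1 := by
  obtain ⟨w, hl, -, hp⟩ := exists_word hS g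
  rw [h, List.length_eq_zero_iff] at hl
  rw [← hp, hl, List.prod_nil]

lemma wordLength_mul_le (hS : Subgroup.closure S = ⊤) (g h : G) :
    wordLength S (g * h) ≤ wordLength S g + wordLength S h := by
  obtain ⟨w, hl, hw, hp⟩ := exists_word hS g
  obtain ⟨w', hl', hw', hp'⟩ := exists_word hS h
  have := wordLength_le_of_list (S := S) (w ++ w') (by
    intro x hx
    rcases List.mem_append.1 hx with hx | hx
    exacts [hw x hx, hw' x hx])
  rwa [List.prod_append, hp, hp', List.length_append, hl, hl'] at this

lemma wordLength_inv_le (hS : Subgroup.closure S = ⊤) (g : G) :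
    wordLength S g⁻¹ ≤ wordLength S g := by
  obtain ⟨w, hl, hw, hp⟩ := exists_word hS g
  have := wordLength_le_of_list (S := S) (w.map (·⁻¹)).reverse (by
    intro x hx
    simp only [List.mem_reverse, List.mem_map] at hx
    obtain ⟨y, hy, rfl⟩ := hx
    rw [inv_inv]
    exact (hw y hy).symm)
  rwa [← List.prod_inv_reverse, hp, List.length_reverse, List.length_map, hl] at this

lemma wordLength_inv (hS : Subgroup.closure S = ⊤) (g : G) :
    wordLength S g⁻¹ = wordLength S g :=
  le_antisymm (wordLength_inv_le hS g) (by simpa using wordLength_inv_le hS g⁻¹)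

/-- A prefix of a geodesic word is geodesic, and so is the corresponding suffix. -/
lemma wordLength_split (hS : Subgroup.closure S = ⊤) (g : G) (k l : ℕ)
    (h : wordLength S g = k + l) :
    ∃ m : G, wordLength S m = k ∧ wordLength S (m⁻¹ * g) = l := by
  obtain ⟨w, hl, hw, hp⟩ := exists_word hS g
  have e1 := wordLength_le_of_list (S := S) (w.take k) fun x hx => hw x (List.mem_of_mem_take hx)
  have e2 := wordLength_le_of_list (S := S) (w.drop k) fun x hx => hw x (List.mem_of_mem_drop hx)
  have e3 : (w.take k).prod * (w.drop k).prod = g := by rw [List.prod_take_mul_prod_drop, hp]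
  have e4 := wordLength_mul_le hS (w.take k).prod (w.drop k).prod
  rw [e3] at e4
  rw [List.length_take] at e1
  rw [List.length_drop] at e2
  refine ⟨(w.take k).prod, by omega, ?_⟩
  rw [← e3, inv_mul_cancel_left]
  omega

lemma finite_ball (hfin : S.Finite) (hS : Subgroup.closure S = ⊤) (n : ℕ) :
    {g : G | wordLength S g ≤ n}.Finite := by
  induction n with
  | zero =>
    refine (Set.finite_singleton (1 : G)).subset fun g hg => ?_
    exact eq_one_of_wordLength hS (Nat.le_zero.1 hg)
  | succ n ih =>
    have hT : (insert (1 : G) (S ∪ S⁻¹)).Finite := (hfin.union hfin.inv).insert _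
    refine (ih.mul hT).subset fun g hg => ?_
    simp only [mem_ofPred_eq] at hg
    obtain ⟨w, hl, hw, hp⟩ := exists_word hS g
    refine Set.mem_mul.2 ⟨(w.take n).prod, ?_, (w.drop n).prod, ?_, ?_⟩
    · have := wordLength_le_of_list (S := S) (w.take n)
        fun x hx => hw x (List.mem_of_mem_take hx)
      rw [List.length_take] at this
      simp only [mem_ofPred_eq]
      omega
    · have hlen : (w.drop n).length ≤ 1 := by rw [List.length_drop]; omega
      have hmem : ∀ x ∈ w.drop n, x ∈ S ∨ x⁻¹ ∈ S := fun x hx => hw x (List.mem_of_mem_drop hx)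
      generalize w.drop n = v at hlen hmem
      match v, hlen, hmem with
      | [], _, _ => simp
      | [y], _, hmem => simpa using Or.inr (hmem y (by simp))
    · rw [List.prod_take_mul_prod_drop, hp]

lemma countable_of_gen (hfin : S.Finite) (hS : Subgroup.closure S = ⊤) : Countable G := by
  rw [← Set.countable_univ_iff]
  have : (univ : Set G) = ⋃ n : ℕ, {g : G | wordLength S g ≤ n} := by
    ext g
    simpa using ⟨wordLength S g, le_rfl⟩
  rw [this]
  exact Set.countable_iUnion fun n => (finite_ball hfin hS n).countable

/-- The definition of strong quasiconvexity quantifies over spaces in the lowest universe, so a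
model there is needed; it exists because a finitely generated group is countable. -/
lemma exists_cayleyModel (hfin : S.Finite) (hS : Subgroup.closure S = ⊤) :
    ∃ (X : Type) (_ : MetricSpace X) (ι : G → X), CayleyModel G S X ι := by
  have := countable_of_gen hfin hS
  have : Small.{0} G := Countable.toSmall G
  let e : G ≃ Shrink.{0} G := equivShrink.{0} G
  let D : GraphMetric (Shrink.{0} G) :=
    { d := fun x y => wordLength S ((e.symm x)⁻¹ * e.symm y)
      self := fun x => by simp [wordLength_one]
      eq := fun x y h => e.symm.injective (inv_mul_eq_one.1 (eq_one_of_wordLength hS h))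
      symm := fun x y => by
        rw [← wordLength_inv hS]
        simp
      tri := fun x y z => by
        have := wordLength_mul_le hS ((e.symm x)⁻¹ * e.symm y) ((e.symm y)⁻¹ * e.symm z)
        simpa [mul_assoc] using this
      split := fun x y k l h => by
        obtain ⟨m, h1, h2⟩ := wordLength_split hS _ k l h
        refine ⟨e (e.symm x * m), by simpa using h1, ?_⟩
        simpa [mul_assoc] using h2 }
  obtain ⟨X, mX, ι, h1, h2, h3⟩ := D.exists_model
  refine ⟨X, mX, fun g => ι (e g), h1, fun g h => ?_, fun x => ?_⟩
  · rw [h2]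
    simp [D, wordDist]
  · obtain ⟨v, hv⟩ := h3 x
    exact ⟨e.symm v, by simpa using hv⟩

end WordLength

/-! ### The middle of a long geodesic with endpoints near a Morse subset -/

lemma qiEmbedOn_of_le {X : Type*} [MetricSpace X] {γ : ℝ → X} {I : Set ℝ} {K : ℝ}
    (h : ∀ s ∈ I, ∀ t ∈ I, s ≤ t →
      1 / K * (t - s) ≤ dist (γ s) (γ t) ∧ dist (γ s) (γ t) ≤ K * (t - s)) :
    QIEmbedOn γ I K 0 := by
  intro s hs t ht
  rw [sub_zero, add_zero]
  rcases le_total s t with hst | hst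
  · rw [abs_sub_comm, abs_of_nonneg (sub_nonneg.2 hst)]; exact h s hs t ht hst
  · rw [dist_comm, abs_of_nonneg (sub_nonneg.2 hst)]; exact h t ht s hs hst

/-- Join `a` and `b` to their nearest points on the geodesic `α` and discard the ends of `α`. The
resulting path is a `(3, 0)`-quasi-geodesic between `a` and `b` as soon as `α` is much longer than the
distances from `a` and `b` to its ends, and it still contains the middle part of `α`. -/
lemma infDist_middle_le {X : Type*} [MetricSpace X] (hX : IsGeodesicSpace X) {A : Set X} {M : ℝ}
    (hM : ∀ (γ : ℝ → X) (a b : ℝ), a ≤ b → QIEmbedOn γ (Icc a b) 3 0 →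
      γ a ∈ A → γ b ∈ A → ∀ t ∈ Icc a b, infDist (γ t) A ≤ M)
    {α : ℝ → X} {L D m : ℝ}
    (hα : ∀ s ∈ Icc (0 : ℝ) L, ∀ t ∈ Icc (0 : ℝ) L, dist (α s) (α t) = |s - t|)
    {a b : X} (ha : a ∈ A) (hb : b ∈ A) (haD : dist a (α 0) ≤ D) (hbD : dist b (α L) ≤ D)
    (hLD : 12 * D ≤ L) (hm : 2 * D ≤ m) (hm' : m ≤ L - 2 * D) :
    infDist (α m) A ≤ M := by
  have hD : 0 ≤ D := dist_nonneg.trans haD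
  have hL : 0 ≤ L := by linarith
  have hcont : ContinuousOn α (Icc 0 L) := by
    have : LipschitzOnWith 1 α (Icc 0 L) := LipschitzOnWith.of_dist_le_mul fun s hs t ht => by
      rw [hα s hs t ht, Real.dist_eq]; simp
    exact this.continuousOn
  have hne : (Icc (0 : ℝ) L).Nonempty := ⟨0, le_rfl, hL⟩
  obtain ⟨p, hp, hpmin⟩ := isCompact_Icc.exists_isMinOn hne
    (by fun_prop : ContinuousOn (fun t => dist a (α t)) (Icc 0 L))
  obtain ⟨q, hq, hqmin⟩ := isCompact_Icc.exists_isMinOn hne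
    (by fun_prop : ContinuousOn (fun t => dist b (α t)) (Icc 0 L))
  have h0 : (0 : ℝ) ∈ Icc (0 : ℝ) L := ⟨le_rfl, hL⟩
  have h1 : L ∈ Icc (0 : ℝ) L := ⟨hL, le_rfl⟩
  have hpmin' : ∀ t ∈ Icc (0 : ℝ) L, dist a (α p) ≤ dist a (α t) := fun t ht => hpmin ht
  have hqmin' : ∀ t ∈ Icc (0 : ℝ) L, dist b (α q) ≤ dist b (α t) := fun t ht => hqmin ht
  have hα' : ∀ s ∈ Icc (0 : ℝ) L, ∀ t ∈ Icc (0 : ℝ) L, s ≤ t → dist (α s) (α t) = t - s := by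
    intro s hs t ht hst
    rw [hα s hs t ht, abs_sub_comm, abs_of_nonneg (sub_nonneg.2 hst)]
  have hu := (hpmin' 0 h0).trans haD
  have hw := (hqmin' L h1).trans hbD
  have hp2 : p ≤ 2 * D := by
    have := hα' 0 h0 p hp hp.1
    have := dist_triangle_left (α 0) (α p) a
    linarith
  have hq2 : L - 2 * D ≤ q := by
    have := hα' q hq L h1 hq.2
    have := dist_triangle_left (α q) (α L) b
    linarith
  obtain ⟨β, hβ0, hβ1, hβ⟩ := hX a (α p)
  obtain ⟨δ, hδ0, hδ1, hδ⟩ := hX (α q) b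
  set u := dist a (α p) with hu_def
  have hu0 : 0 ≤ u := dist_nonneg
  rw [dist_comm (α q) b] at hδ hδ1
  set w := dist b (α q) with hw_def
  have hw0 : 0 ≤ w := dist_nonneg
  let γ : ℝ → X := fun s => if s < p then β (s - (p - u)) else if s ≤ q then α s else δ (s - q)
  -- descriptions of the three pieces
  have γ1 : ∀ s, s < p → γ s = β (s - (p - u)) := fun s h => if_pos h
  have γ2 : ∀ s, p ≤ s → s ≤ q → γ s = α s := fun s h h' => by
    simp only [γ, not_lt.2 h, h', if_true, if_false]
  have γ3 : ∀ s, q < s → γ s = δ (s - q) := fun s h => by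
    have : p ≤ s := by linarith
    simp only [γ, not_lt.2 this, not_le.2 h, if_false]
  have γa : γ (p - u) = a := by
    rcases hu0.eq_or_lt with h | h
    · rw [← h, sub_zero, γ2 p le_rfl (by linarith)]
      exact (dist_eq_zero.1 (hu_def.symm.trans h.symm)).symm
    · rw [γ1 _ (by linarith), sub_self, hβ0]
  have γb : γ (q + w) = b := by
    rcases hw0.eq_or_lt with h | h
    · rw [← h, add_zero, γ2 q (by linarith) le_rfl]
      exact (dist_eq_zero.1 (hw_def.symm.trans h.symm)).symm
    · rw [γ3 _ (by linarith), add_sub_cancel_left, hδ1]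
  have b1 : ∀ s, p - u ≤ s → s < p →
      dist a (γ s) = s - (p - u) ∧ dist (γ s) (α p) = p - s := by
    intro s hs hs'
    rw [γ1 s hs']
    have hmem : s - (p - u) ∈ Icc 0 u := ⟨by linarith, by linarith⟩
    have e1 := hβ 0 ⟨le_rfl, hu0⟩ _ hmem
    have e2 := hβ _ hmem u ⟨hu0, le_rfl⟩
    rw [hβ0, abs_sub_comm, sub_zero, abs_of_nonneg hmem.1] at e1
    rw [hβ1, abs_sub_comm, abs_of_nonneg (by linarith)] at e2
    exact ⟨e1, by linarith⟩
  have b3 : ∀ s, q < s → s ≤ q + w →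
      dist b (γ s) = q + w - s ∧ dist (γ s) (α q) = s - q := by
    intro s hs hs'
    rw [γ3 s hs]
    have hmem : s - q ∈ Icc 0 w := ⟨by linarith, by linarith⟩
    have e1 := hδ 0 ⟨le_rfl, hw0⟩ _ hmem
    have e2 := hδ _ hmem w ⟨hw0, le_rfl⟩
    rw [hδ0, abs_sub_comm, sub_zero, abs_of_nonneg hmem.1, dist_comm] at e1
    rw [hδ1, abs_sub_comm, abs_of_nonneg (by linarith), dist_comm] at e2
    exact ⟨by linarith, e1⟩
  have qi : QIEmbedOn γ (Icc (p - u) (q + w)) 3 0 := by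
    refine qiEmbedOn_of_le fun s hs t ht hst => ?_
    simp only [mem_Icc] at hs ht hp hq
    by_cases cs : s < p
    · obtain ⟨s1, s2⟩ := b1 s hs.1 cs
      by_cases ct : t < p
      · rw [γ1 s cs, γ1 t ct, hβ _ ⟨by linarith, by linarith⟩ _ ⟨by linarith, by linarith⟩,
          abs_sub_comm, abs_of_nonneg (by linarith)]
        constructor <;> linarith
      · push Not at ct
        by_cases ct' : t ≤ q
        · rw [γ2 t ct ct']
          have ht' : t ∈ Icc (0 : ℝ) L := ⟨by linarith, by linarith⟩
          have e1 := hα' p hp t ht' ct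
          have e2 := hpmin' t ht'
          have e3 := dist_triangle a (γ s) (α t)
          have e4 := dist_triangle (γ s) (α p) (α t)
          have e5 := dist_triangle_left (α p) (α t) (γ s)
          constructor <;> linarith
        · push Not at ct'
          obtain ⟨t1, t2⟩ := b3 t ct' ht.2
          have e1 := hα' p hp q hq (by linarith)
          have e2 := dist_triangle4 (γ s) (α p) (α q) (γ t)
          have e3 := dist_triangle4 (α p) (γ s) (γ t) (α q)
          rw [dist_comm (α q) (γ t)] at e2
          rw [dist_comm (α p) (γ s)] at e3
          constructor <;> linarith
    · push Not at cs
      by_cases cs' : s ≤ q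
      · rw [γ2 s cs cs']
        have hs' : s ∈ Icc (0 : ℝ) L := ⟨by linarith, by linarith⟩
        by_cases ct' : t ≤ q
        · rw [γ2 t (by linarith) ct', hα' s hs' t ⟨by linarith, by linarith⟩ hst]
          constructor <;> linarith
        · push Not at ct'
          obtain ⟨t1, t2⟩ := b3 t ct' ht.2
          have e1 := hα' s hs' q hq cs'
          have e2 := hqmin' s hs'
          have e3 := dist_triangle b (γ t) (α s)
          have e4 := dist_triangle (α s) (α q) (γ t)
          have e5 := dist_triangle_right (α s) (α q) (γ t)
          rw [dist_comm (γ t) (α s)] at e3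
          rw [dist_comm (α q) (γ t)] at e4 e5
          constructor <;> linarith
      · push Not at cs'
        rw [γ3 s cs', γ3 t (by linarith), hδ _ ⟨by linarith, by linarith⟩ _
          ⟨by linarith, by linarith⟩, abs_sub_comm, abs_of_nonneg (by linarith)]
        constructor <;> linarith
  have := hM γ (p - u) (q + w) (by linarith) qi (by rwa [γa]) (by rwa [γb]) m
    ⟨by linarith, by linarith⟩
  rwa [γ2 m (by linarith) (by linarith)] at this

/-! ### Cosets near the middle of a long geodesic -/

/-- A uniform radius for one subgroup: if `j ∈ g H g⁻¹` is much longer than `g`, and `m` lies on a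
geodesic from `1` to `j`, at distance at least twice the bound `D` on the length of `g` from both
ends, then `m` is within `R` of `g H`, where `R` depends on `H` and `S` but not on `g`. -/
lemma exists_radius {G : Type*} [Group G] {S : Set G} (hfin : S.Finite)
    (hS : Subgroup.closure S = ⊤) {H : Subgroup G} (hH : StronglyQuasiconvex H) :
    ∃ R : ℕ, ∀ (g j m : G) (D : ℕ), g⁻¹ * j * g ∈ H → wordLength S g ≤ D →
      wordLength S m + wordLength S (m⁻¹ * j) = wordLength S j →
      12 * D ≤ wordLength S j → 2 * D ≤ wordLength S m → 2 * D ≤ wordLength S (m⁻¹ * j) →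
      ∃ h ∈ H, wordLength S (m⁻¹ * (g * h)) ≤ R := by
  obtain ⟨X, mX, ι, hmodel⟩ := exists_cayleyModel (G := G) hfin hS
  obtain ⟨M, hM0, hM⟩ := hH S hfin hS X ι hmodel 3 0 (by norm_num) le_rfl
  obtain ⟨hX, hι, -⟩ := hmodel
  refine ⟨⌈M + 1⌉₊, fun g j m D hj hg hadd hL h1 h2 => ?_⟩
  -- a geodesic of the model from `g⁻¹` to `g⁻¹ j` passing through the vertex `g⁻¹ m`
  have d1 : dist (ι g⁻¹) (ι (g⁻¹ * m)) = wordLength S m := by rw [hι, wordDist]; simp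
  have d2 : dist (ι (g⁻¹ * m)) (ι (g⁻¹ * j)) = wordLength S (m⁻¹ * j) := by
    rw [hι, wordDist]; simp [mul_assoc]
  have d3 : dist (ι g⁻¹) (ι (g⁻¹ * j)) = wordLength S j := by rw [hι, wordDist]; simp
  obtain ⟨α, α0, αm, αL, hα⟩ := concat_path (hX.shortPath (ι g⁻¹) (ι (g⁻¹ * m)))
    (hX.shortPath (ι (g⁻¹ * m)) (ι (g⁻¹ * j)))
  have hsum : dist (ι g⁻¹) (ι (g⁻¹ * m)) + dist (ι (g⁻¹ * m)) (ι (g⁻¹ * j)) =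
      wordLength S j := by rw [d1, d2]; exact_mod_cast hadd
  rw [hsum] at hα αL
  rw [d1] at αm
  have hgeo := geodesic_of_lip hα (by rw [α0, αL, d3])
  have hadd' : (wordLength S m : ℝ) + wordLength S (m⁻¹ * j) = wordLength S j := by
    exact_mod_cast hadd
  have hL' : 12 * (D : ℝ) ≤ wordLength S j := by exact_mod_cast hL
  have h1' : 2 * (D : ℝ) ≤ wordLength S m := by exact_mod_cast h1
  have h2' : 2 * (D : ℝ) ≤ wordLength S (m⁻¹ * j) := by exact_mod_cast h2
  have hg' : (wordLength S g : ℝ) ≤ D := by exact_mod_cast hg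
  have key := infDist_middle_le hX hM hgeo (a := ι 1) (b := ι (g⁻¹ * j * g)) (D := D)
    (m := wordLength S m) ⟨1, H.one_mem, rfl⟩ ⟨_, hj, rfl⟩
    (by
      rw [α0, hι, wordDist]
      simpa [wordLength_inv hS] using hg')
    (by
      rw [αL, dist_comm, hι, wordDist]
      simpa [mul_assoc] using hg')
    hL' h1' (by linarith)
  rw [αm] at key
  obtain ⟨y, ⟨h, hh, rfl⟩, hy⟩ := (infDist_lt_iff (s := ι '' (H : Set G))
    ⟨ι 1, 1, H.one_mem, rfl⟩).1 (key.trans_lt (lt_add_one M))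
  refine ⟨h, hh, ?_⟩
  rw [hι, wordDist] at hy
  have : (wordLength S (m⁻¹ * (g * h)) : ℝ) < M + 1 := by simpa [mul_assoc] using hy
  exact_mod_cast this.le.trans (Nat.le_ceil _)

/-- A finite collection of strongly quasiconvex subgroups of a finitely generated group
has finite height: there is `n` such that the intersection of more than `n` essentially
distinct conjugates (pairwise distinct cosets) is finite. -/
theorem stronglyQuasiconvex_finite_height
    {G : Type*} [Group G] (hfg : ∃ S : Set G, S.Finite ∧ Subgroup.closure S = ⊤)
    (ℓ : ℕ) (Hs : Fin ℓ → Subgroup G) (hsqc : ∀ i, StronglyQuasiconvex (Hs i)) :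
    ∃ n : ℕ, ∀ k : ℕ, n < k → ∀ (g : Fin k → G) (σ : Fin k → Fin ℓ),
      (∀ i j : Fin k, i ≠ j → g i • ((Hs (σ i) : Set G)) ≠ g j • ((Hs (σ j) : Set G))) →
      (⋂ i : Fin k, (fun x => g i * x * (g i)⁻¹) '' (Hs (σ i) : Set G)).Finite := by
  obtain ⟨S, hfin, hS⟩ := hfg
  choose R hR using fun i => exists_radius hfin hS (hsqc i)
  let R₀ : ℕ := Finset.univ.sup R
  have hball := finite_ball hfin hS R₀
  let B : Finset G := hball.toFinset
  refine ⟨ℓ * B.card, fun k hk g σ hdist => ?_⟩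
  by_contra hinf
  let D : ℕ := Finset.univ.sup fun i => wordLength S (g i)
  -- an infinite intersection contains an element outside a given ball
  obtain ⟨j, hj, hjlong⟩ :=
    Set.Infinite.exists_notMem_finite hinf (finite_ball hfin hS (12 * D))
  have hjlong' : 12 * D < wordLength S j := by simpa using hjlong
  -- any point of a geodesic from `1` to `j` at distance at least `2 * D` from both ends will do
  obtain ⟨m, hm1, hm2⟩ := wordLength_split hS j (2 * D) (wordLength S j - 2 * D) (by omega)
  have hconj : ∀ i, ∃ h ∈ Hs (σ i), wordLength S (m⁻¹ * (g i * h)) ≤ R (σ i) := by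
    intro i
    refine hR (σ i) (g i) j m D ?_ (Finset.le_sup (f := fun i => wordLength S (g i))
      (Finset.mem_univ i)) (by omega) (by omega) (by omega) (by omega)
    obtain ⟨x, hx, rfl⟩ := Set.mem_iInter.1 hj i
    simpa [mul_assoc] using hx
  choose h hh hlen using hconj
  -- the cosets all meet the ball of radius `R₀` around `m`, and there are few such cosets
  let f : Fin k → Fin ℓ × G := fun i => (σ i, m⁻¹ * (g i * h i))
  have hmaps : ∀ i ∈ (Finset.univ : Finset (Fin k)),
      f i ∈ (Finset.univ : Finset (Fin ℓ)) ×ˢ B := by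
    intro i _
    simp only [f, B, Finset.mem_product, Finset.mem_univ, true_and, Set.Finite.mem_toFinset,
      mem_ofPred_eq]
    exact (hlen i).trans (Finset.le_sup (Finset.mem_univ (σ i)))
  have hcard : ((Finset.univ : Finset (Fin ℓ)) ×ˢ B).card <
      (Finset.univ : Finset (Fin k)).card := by
    simpa [Finset.card_product] using hk
  obtain ⟨i, -, i', -, hne, heq⟩ := Finset.exists_ne_map_eq_of_card_lt_of_maps_to hcard hmaps
  refine hdist i i' hne ?_
  obtain ⟨hσ, hg⟩ := Prod.ext_iff.1 heq
  replace hσ : σ i = σ i' := hσ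
  replace hg : g i * h i = g i' * h i' := mul_left_cancel hg
  have h1 := hh i
  rw [hσ] at h1 ⊢
  rw [leftCoset_eq_iff]
  have : (g i)⁻¹ * g i' = h i * (h i')⁻¹ := by
    rw [eq_mul_inv_iff_mul_eq, mul_assoc, ← hg, inv_mul_cancel_left]
  rw [this]
  exact (Hs (σ i')).mul_mem h1 ((Hs (σ i')).inv_mem (hh i'))
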